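/- Let η be a nonnegative atomless random variable on a probability space (Ω, 𝓕, P), and let μ be a Borel probability measure on [0, ∞). Then the infimum of E[η·X] over all nonnegative random variables X on Ω with law μ equals ∫₀¹ q_η(1−p) · q_μ(p) dp, and this infimum is attained by X* := q_μ(1 − F_η(η)). -/

import Mathlib

open MeasureTheory Set

/-- The quantile function of a Borel measure `μ` on `ℝ`:
`q_μ(p) = inf {x | p ≤ μ((-∞, x])}`. -/
noncomputable def quantile (μ : Measure ℝ) (p : ℝ) : ℝ :=
  sInf {x : ℝ | p ≤ (μ (Iic x)).toReal}

lemma cdf_toReal (μ : Measure ℝ) [IsProbabilityMeasure μ] (x : ℝ) :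
    (μ (Iic x)).toReal = ProbabilityTheory.cdf μ x := by
  rw [ProbabilityTheory.cdf_eq_real]; rfl

lemma quantile_le_iff (μ : Measure ℝ) [IsProbabilityMeasure μ] {p : ℝ} (hp : p ∈ Ioo (0:ℝ) 1)
    (x : ℝ) : quantile μ p ≤ x ↔ p ≤ (μ (Iic x)).toReal := by
  unfold quantile
  simp only [cdf_toReal]
  have hmono := ProbabilityTheory.monotone_cdf μ
  have hbdd : BddBelow {x : ℝ | p ≤ ProbabilityTheory.cdf μ x} := by
    obtain ⟨b, hb⟩ := ((ProbabilityTheory.tendsto_cdf_atBot μ).eventually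
      (gt_mem_nhds hp.1)).exists
    refine ⟨b, fun y hy => ?_⟩
    by_contra h
    have h1 := hmono (not_le.1 h).le
    have hy' : p ≤ ProbabilityTheory.cdf μ y := hy
    linarith
  have hne : {x : ℝ | p ≤ ProbabilityTheory.cdf μ x}.Nonempty := by
    obtain ⟨b, hb⟩ := ((ProbabilityTheory.tendsto_cdf_atTop μ).eventually
      (lt_mem_nhds hp.2)).exists
    exact ⟨b, le_of_lt hb⟩
  constructor
  · intro h
    have hc : ContinuousWithinAt (ProbabilityTheory.cdf μ) (Ioi x) x :=
      ((ProbabilityTheory.cdf μ).right_continuous x).mono Ioi_subset_Ici_self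
    refine ge_of_tendsto hc ?_
    filter_upwards [self_mem_nhdsWithin] with y hy
    obtain ⟨z, hz, hzy⟩ := exists_lt_of_csInf_lt hne (lt_of_le_of_lt h hy)
    exact le_trans hz (hmono hzy.le)
  · intro h
    exact csInf_le hbdd h

lemma lt_quantile_iff (μ : Measure ℝ) [IsProbabilityMeasure μ] {p : ℝ} (hp : p ∈ Ioo (0:ℝ) 1)
    (x : ℝ) : x < quantile μ p ↔ (μ (Iic x)).toReal < p := by
  rw [← not_le, quantile_le_iff μ hp, not_le]

lemma quantile_nonneg' (μ : Measure ℝ) [IsProbabilityMeasure μ] (hμ : μ (Iio 0) = 0) (p : ℝ) :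
    0 ≤ quantile μ p := by
  unfold quantile
  rcases le_or_gt p 0 with hp | hp
  · have : {x : ℝ | p ≤ (μ (Iic x)).toReal} = univ := by
      ext x; simp only [mem_ofPred_eq, mem_univ, iff_true]
      exact hp.trans ENNReal.toReal_nonneg
    rw [this, Real.sInf_univ]
  · refine Real.sInf_nonneg fun x hx => ?_
    by_contra h
    have h0 : μ (Iic x) = 0 := measure_mono_null (fun y hy => lt_of_le_of_lt hy (not_le.1 h)) hμ
    simp only [mem_ofPred_eq, h0, ENNReal.toReal_zero] at hx
    linarith

lemma quantile_outside (μ : Measure ℝ) [IsProbabilityMeasure μ] {p : ℝ} (hp : p ∉ Ioo (0:ℝ) 1)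
    (h1 : p ≠ 1) : quantile μ p = 0 := by
  unfold quantile
  rcases le_or_gt p 0 with hp0 | hp0
  · have : {x : ℝ | p ≤ (μ (Iic x)).toReal} = univ := by
      ext x; simp only [mem_ofPred_eq, mem_univ, iff_true]
      exact hp0.trans ENNReal.toReal_nonneg
    rw [this, Real.sInf_univ]
  · have h2 : 1 < p := by
      by_contra h
      exact hp ⟨hp0, lt_of_le_of_ne (not_lt.1 h) h1⟩
    have : {x : ℝ | p ≤ (μ (Iic x)).toReal} = ∅ := by
      ext x; simp only [mem_ofPred_eq, mem_empty_iff_false, iff_false, not_le]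
      rw [cdf_toReal]
      exact lt_of_le_of_lt (ProbabilityTheory.cdf_le_one μ x) h2
    rw [this, Real.sInf_empty]

lemma measurable_quantile (μ : Measure ℝ) [IsProbabilityMeasure μ] : Measurable (quantile μ) := by
  refine measurable_of_Iic fun x => ?_
  have : quantile μ ⁻¹' Iic x = (Ioo (0:ℝ) 1 ∩ Iic (μ (Iic x)).toReal) ∪
      ({p | p = 1 ∧ quantile μ 1 ≤ x} ∪ {p | (p ∉ Ioo (0:ℝ) 1 ∧ p ≠ 1) ∧ 0 ≤ x}) := by
    ext p
    by_cases hp : p ∈ Ioo (0:ℝ) 1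
    · have hp1 : p ≠ 1 := hp.2.ne
      simp only [mem_preimage, mem_Iic, mem_union, mem_inter_iff, mem_ofPred_eq, hp, hp1,
        quantile_le_iff μ hp]
      simp
    · by_cases h1 : p = 1
      · subst h1; simp
      · simp only [mem_preimage, mem_Iic, mem_union, mem_inter_iff, mem_ofPred_eq, hp, h1,
          quantile_outside μ hp h1]
        simp [h1]
  rw [this]
  refine (measurableSet_Ioo.inter measurableSet_Iic).union (MeasurableSet.union ?_ ?_)
  · exact (measurableSet_singleton (1:ℝ)).inter (MeasurableSet.const _)
  · exact (measurableSet_Ioo.compl.inter (measurableSet_singleton (1:ℝ)).compl).inter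
      (MeasurableSet.const _)

lemma map_quantile (μ : Measure ℝ) [IsProbabilityMeasure μ] :
    (volume.restrict (Ioo (0:ℝ) 1)).map (quantile μ) = μ := by
  have : IsFiniteMeasure (volume.restrict (Ioo (0:ℝ) 1)) := ⟨by simp⟩
  refine Measure.ext_of_Iic _ _ fun x => ?_
  rw [Measure.map_apply (measurable_quantile μ) measurableSet_Iic,
    Measure.restrict_apply (measurable_quantile μ measurableSet_Iic)]
  have h1 : (μ (Iic x)).toReal ≤ 1 := by
    rw [cdf_toReal]; exact ProbabilityTheory.cdf_le_one μ x
  have hle : volume (quantile μ ⁻¹' Iic x ∩ Ioo 0 1) ≤ μ (Iic x) := by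
    calc _ ≤ volume (Ioc 0 (μ (Iic x)).toReal) := by
          refine measure_mono fun p hp => ⟨hp.2.1, (quantile_le_iff μ hp.2 x).1 hp.1⟩
      _ = _ := by simp
  refine le_antisymm hle ?_
  calc μ (Iic x) = volume (Ioo 0 (μ (Iic x)).toReal) := by simp
    _ ≤ _ := by
      refine measure_mono fun p hp => ?_
      have : p ∈ Ioo (0:ℝ) 1 := ⟨hp.1, hp.2.trans_le h1⟩
      exact ⟨(quantile_le_iff μ this x).2 hp.2.le, this⟩

/-- probability integral transform -/
lemma map_unif (ν : Measure ℝ) [IsProbabilityMeasure ν]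
    (hc : Continuous fun x => (ν (Iic x)).toReal) :
    ν.map (fun x => (ν (Iic x)).toReal) = volume.restrict (Ioo (0:ℝ) 1) := by
  set F : ℝ → ℝ := fun x => (ν (Iic x)).toReal with hF
  have hFc : F = ProbabilityTheory.cdf ν := by ext x; exact cdf_toReal ν x
  have hmono : Monotone F := by rw [hFc]; exact ProbabilityTheory.monotone_cdf ν
  have hFm : Measurable F := hc.measurable
  have hF1 : ∀ x, F x ≤ 1 := fun x => by rw [hFc]; exact ProbabilityTheory.cdf_le_one ν x
  have hIVT : ∀ u ∈ Ioo (0:ℝ) 1, ∃ x, F x = u := by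
    intro u hu
    obtain ⟨a, ha⟩ := ((ProbabilityTheory.tendsto_cdf_atBot ν).eventually
      (gt_mem_nhds hu.1)).exists
    obtain ⟨b, hb⟩ := ((ProbabilityTheory.tendsto_cdf_atTop ν).eventually
      (lt_mem_nhds hu.2)).exists
    rw [← hFc] at ha hb
    exact mem_range_of_exists_le_of_exists_ge hc ⟨a, ha.le⟩ ⟨b, hb.le⟩
  have hFν : ∀ x, ν (Iic x) = ENNReal.ofReal (F x) := fun x => by simp [hF]
  have hge : ∀ u ∈ Ioo (0:ℝ) 1, ENNReal.ofReal u ≤ ν (F ⁻¹' Iic u) := by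
    intro u hu
    obtain ⟨x, rfl⟩ := hIVT u hu
    rw [← hFν]
    exact measure_mono fun y hy => hmono hy
  have hlt : ∀ u ∈ Ioo (0:ℝ) 1, ν (F ⁻¹' Iio u) ≤ ENNReal.ofReal u := by
    intro u hu
    obtain ⟨x, rfl⟩ := hIVT u hu
    rw [← hFν]
    refine measure_mono fun y hy => ?_
    by_contra h
    exact absurd (hmono (not_le.1 h).le) (not_le.2 hy)
  have : IsFiniteMeasure (volume.restrict (Ioo (0:ℝ) 1)) := ⟨by simp⟩
  have hle : ∀ u < 1, ν (F ⁻¹' Iic u) ≤ ENNReal.ofReal u := by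
    intro u hu
    have hc' : Filter.Tendsto ENNReal.ofReal (nhdsWithin (max u 0) (Ioi (max u 0)))
        (nhds (ENNReal.ofReal (max u 0))) :=
      (ENNReal.continuous_ofReal.tendsto _).mono_left nhdsWithin_le_nhds
    have hm : ENNReal.ofReal (max u 0) = ENNReal.ofReal u := by simp
    rw [← hm]
    refine ge_of_tendsto hc' ?_
    have hlt1 : max u 0 < 1 := max_lt hu one_pos
    filter_upwards [Ioo_mem_nhdsGT hlt1] with v hv
    have h0 : 0 < v := (le_max_right _ _).trans_lt hv.1
    have h1 : u < v := (le_max_left _ _).trans_lt hv.1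
    exact (measure_mono fun y hy => lt_of_le_of_lt hy h1).trans (hlt v ⟨h0, hv.2⟩)
  refine Measure.ext_of_Iic _ _ fun u => ?_
  rw [Measure.map_apply hFm measurableSet_Iic, Measure.restrict_apply measurableSet_Iic]
  rcases le_or_gt u 0 with h0 | h0
  · have h1 : ν (F ⁻¹' Iic u) = 0 := by
      have := hle u (by linarith)
      rwa [ENNReal.ofReal_of_nonpos h0, nonpos_iff_eq_zero] at this
    have h2 : Iic u ∩ Ioo (0:ℝ) 1 = ∅ := by
      ext y; simp only [mem_inter_iff, mem_Iic, mem_Ioo, mem_empty_iff_false, iff_false]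
      rintro ⟨a, b, c⟩; linarith
    rw [h1, h2, measure_empty]
  · rcases lt_or_ge u 1 with h1 | h1
    · have h2 : Iic u ∩ Ioo (0:ℝ) 1 = Ioc 0 u := by
        ext y; simp only [mem_inter_iff, mem_Iic, mem_Ioo, mem_Ioc]
        constructor
        · rintro ⟨a, b, c⟩; exact ⟨b, a⟩
        · rintro ⟨a, b⟩; exact ⟨b, a, by linarith⟩
      rw [h2, Real.volume_Ioc, sub_zero]
      exact le_antisymm (hle u h1) (hge u ⟨h0, h1⟩)
    · have h2 : Iic u ∩ Ioo (0:ℝ) 1 = Ioo 0 1 :=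
        inter_eq_right.2 fun y hy => hy.2.le.trans h1
      have h3 : F ⁻¹' Iic u = univ := eq_univ_of_forall fun y => (hF1 y).trans h1
      rw [h2, h3]; simp

lemma map_one_sub :
    (volume.restrict (Ioo (0:ℝ) 1)).map (fun p => 1 - p) = volume.restrict (Ioo (0:ℝ) 1) := by
  have h := ((Measure.measurePreserving_sub_left (volume : Measure ℝ) 1).restrict_preimage
    (measurableSet_Ioo (a := (0:ℝ)) (b := 1))).map_eq
  simpa using h

lemma meas_and {α : Type*} [MeasurableSpace α] {a b c d : α → ℝ} (ha : Measurable a)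
    (hb : Measurable b) (hc : Measurable c) (hd : Measurable d) :
    MeasurableSet {x | a x < b x ∧ c x < d x} := by
  have : {x | a x < b x ∧ c x < d x} = {x | a x < b x} ∩ {x | c x < d x} := by ext x; simp
  rw [this]
  exact (measurableSet_lt ha hb).inter (measurableSet_lt hc hd)

lemma layer {α : Type*} [MeasurableSpace α] (ν : Measure α) [SFinite ν] (f g : α → ℝ)
    (hf : Measurable f) (hg : Measurable g) (hf0 : ∀ a, 0 ≤ f a) :
    ∫⁻ a, ENNReal.ofReal (f a * g a) ∂ν =
      ∫⁻ s in Ioi (0:ℝ), ∫⁻ t in Ioi (0:ℝ), ν {a | s < f a ∧ t < g a} := by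
  have key : ∀ y : ℝ, ∫⁻ s in Ioi (0:ℝ), (Iio y).indicator 1 s = ENNReal.ofReal y := by
    intro y
    rw [lintegral_indicator_one measurableSet_Iio, Measure.restrict_apply measurableSet_Iio,
      inter_comm, Ioi_inter_Iio, Real.volume_Ioo, sub_zero]
  have m1 : MeasurableSet {q : α × ℝ | q.2 < f q.1} :=
    measurableSet_lt measurable_snd (hf.comp measurable_fst)
  have m2 : MeasurableSet {q : (α × ℝ) × ℝ | q.1.2 < f q.1.1 ∧ q.2 < g q.1.1} :=
    meas_and (by fun_prop) (by fun_prop) (by fun_prop) (by fun_prop)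
  have m3 : MeasurableSet {q : (α × ℝ) | q.2 < g q.1} :=
    measurableSet_lt measurable_snd (hg.comp measurable_fst)
  have e1 : ∀ a, ENNReal.ofReal (f a * g a) = ∫⁻ s in Ioi (0:ℝ), ∫⁻ t in Ioi (0:ℝ),
      {q : (α × ℝ) × ℝ | q.1.2 < f q.1.1 ∧ q.2 < g q.1.1}.indicator 1 ((a, s), t) := by
    intro a
    rw [ENNReal.ofReal_mul (hf0 a), ← key (f a), ← key (g a), ← lintegral_mul_const _
      (measurable_one.indicator measurableSet_Iio)]
    refine lintegral_congr fun s => ?_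
    rw [← lintegral_const_mul _ (measurable_one.indicator measurableSet_Iio)]
    refine lintegral_congr fun t => ?_
    by_cases h1 : s < f a <;> by_cases h2 : t < g a <;> simp [indicator, h1, h2]
  simp_rw [e1]
  have mi : Measurable ({q : (α × ℝ) × ℝ | q.1.2 < f q.1.1 ∧ q.2 < g q.1.1}.indicator
    (1 : (α × ℝ) × ℝ → ENNReal)) := measurable_one.indicator m2
  rw [lintegral_lintegral_swap]
  · refine lintegral_congr fun s => ?_
    rw [lintegral_lintegral_swap]
    · refine lintegral_congr fun t => ?_
      have : MeasurableSet {a | s < f a ∧ t < g a} :=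
        meas_and measurable_const hf measurable_const hg
      rw [← lintegral_indicator_one this]
      rfl
    · exact (mi.comp (by fun_prop : Measurable fun q : α × ℝ => ((q.1, s), q.2))).aemeasurable
  · exact (mi.lintegral_prod_right').aemeasurable

/-- The infimum of `E[η X]` over all nonnegative `X` with law `μ` equals
`∫₀¹ q_η(1-p) q_μ(p) dp`, and it is attained by `X* := q_μ(1 - F_η(η))`. -/
theorem hardy_littlewood_inf {Ω : Type*} [MeasurableSpace Ω]
    (P : Measure Ω) [IsProbabilityMeasure P]
    (η : Ω → ℝ) (hη : Measurable η) (hη0 : ∀ ω, 0 ≤ η ω)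
    (hatomless : Continuous fun x => ((P.map η) (Iic x)).toReal)
    (μ : Measure ℝ) [IsProbabilityMeasure μ] (hμ : μ (Iio 0) = 0) :
    sInf {c : ENNReal | ∃ X : Ω → ℝ, Measurable X ∧ (∀ ω, 0 ≤ X ω) ∧ P.map X = μ ∧
          c = ∫⁻ ω, ENNReal.ofReal (η ω * X ω) ∂P}
        = ∫⁻ p in Ioo (0:ℝ) 1,
            ENNReal.ofReal (quantile (P.map η) (1 - p) * quantile μ p) ∧
    P.map (fun ω => quantile μ (1 - ((P.map η) (Iic (η ω))).toReal)) = μ ∧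
    ∫⁻ ω, ENNReal.ofReal (η ω * quantile μ (1 - ((P.map η) (Iic (η ω))).toReal)) ∂P
      = ∫⁻ p in Ioo (0:ℝ) 1,
          ENNReal.ofReal (quantile (P.map η) (1 - p) * quantile μ p) := by
  set ν := P.map η with hν
  have : IsProbabilityMeasure ν := Measure.isProbabilityMeasure_map hη.aemeasurable
  have hν0 : ν (Iio 0) = 0 := by
    rw [hν, Measure.map_apply hη measurableSet_Iio]
    have : η ⁻¹' Iio 0 = ∅ := by
      ext ω; simpa using hη0 ω
    rw [this, measure_empty]
  set V : Ω → ℝ := fun ω => 1 - (ν (Iic (η ω))).toReal with hV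
  have hVm : Measurable V := measurable_const.sub (hatomless.measurable.comp hη)
  have hVlaw : P.map V = volume.restrict (Ioo (0:ℝ) 1) := by
    rw [← map_one_sub, ← map_unif ν hatomless,
      Measure.map_map (by fun_prop) hatomless.measurable, hν, Measure.map_map _ hη]
    · rfl
    · exact (measurable_const.sub measurable_id).comp hatomless.measurable
  have hXm : Measurable (fun ω => quantile μ (V ω)) := (measurable_quantile μ).comp hVm
  have hXlaw : P.map (fun ω => quantile μ (V ω)) = μ := by
    have := Measure.map_map (μ := P) (measurable_quantile μ) hVm
    rw [hVlaw, map_quantile] at this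
    exact this.symm
  have hX0 : ∀ ω, 0 ≤ quantile μ (V ω) := fun ω => quantile_nonneg' μ hμ _
  have b1 : ∀ (ρ : Measure ℝ) [IsProbabilityMeasure ρ] (x : ℝ), (ρ (Iic x)).toReal ≤ 1 := by
    intro ρ _ x
    rw [cdf_toReal]; exact ProbabilityTheory.cdf_le_one ρ x
  set K : ENNReal := ∫⁻ s in Ioi (0:ℝ), ∫⁻ t in Ioi (0:ℝ),
    ENNReal.ofReal (1 - (ν (Iic s)).toReal - (μ (Iic t)).toReal) with hK
  have hRHS : ∫⁻ p in Ioo (0:ℝ) 1, ENNReal.ofReal (quantile ν (1 - p) * quantile μ p) = K := by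
    have hm : Measurable fun p : ℝ => quantile ν (1 - p) :=
      (measurable_quantile ν).comp (measurable_const.sub measurable_id)
    rw [layer _ _ _ hm (measurable_quantile μ) (fun p => quantile_nonneg' ν hν0 _)]
    refine lintegral_congr fun s => lintegral_congr fun t => ?_
    rw [Measure.restrict_apply (meas_and measurable_const hm measurable_const (measurable_quantile μ))]
    have : {p | s < quantile ν (1 - p) ∧ t < quantile μ p} ∩ Ioo 0 1 =
        Ioo (μ (Iic t)).toReal (1 - (ν (Iic s)).toReal) := by
      ext p
      have e0 : 0 ≤ (μ (Iic t)).toReal := ENNReal.toReal_nonneg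
      have e1 : 0 ≤ (ν (Iic s)).toReal := ENNReal.toReal_nonneg
      simp only [mem_inter_iff, mem_ofPred_eq]
      constructor
      · rintro ⟨⟨h1, h2⟩, h3⟩
        have h3' : 1 - p ∈ Ioo (0:ℝ) 1 := ⟨by linarith [h3.2], by linarith [h3.1]⟩
        rw [lt_quantile_iff _ h3'] at h1
        rw [lt_quantile_iff _ h3] at h2
        exact ⟨h2, by linarith⟩
      · rintro ⟨h1, h2⟩
        have h3 : p ∈ Ioo (0:ℝ) 1 := ⟨by linarith, by linarith⟩
        have h3' : 1 - p ∈ Ioo (0:ℝ) 1 := ⟨by linarith [h3.2], by linarith [h3.1]⟩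
        rw [lt_quantile_iff _ h3', lt_quantile_iff _ h3]
        exact ⟨⟨by linarith, h1⟩, h3⟩
    rw [this, Real.volume_Ioo]
  have hlow : ∀ X : Ω → ℝ, Measurable X → P.map X = μ →
      K ≤ ∫⁻ ω, ENNReal.ofReal (η ω * X ω) ∂P := by
    intro X hX hXl
    rw [layer P η X hη hX hη0]
    refine lintegral_mono fun s => lintegral_mono fun t => ?_
    have hA : ν (Iic s) = P (η ⁻¹' Iic s) := by rw [hν, Measure.map_apply hη measurableSet_Iic]
    have hB : μ (Iic t) = P (X ⁻¹' Iic t) := by rw [← hXl, Measure.map_apply hX measurableSet_Iic]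
    have hcov : (1 : ENNReal) ≤ P {ω | s < η ω ∧ t < X ω} + (P (η ⁻¹' Iic s) + P (X ⁻¹' Iic t)) := by
      rw [← measure_univ (μ := P)]
      refine le_trans (measure_mono ?_) ((measure_union_le _ _).trans
        (add_le_add le_rfl (measure_union_le _ _)))
      intro ω _
      simp only [mem_union, mem_ofPred_eq, mem_preimage, mem_Iic]
      rcases le_or_gt (η ω) s with h | h
      · exact Or.inr (Or.inl h)
      · rcases le_or_gt (X ω) t with h' | h'
        · exact Or.inr (Or.inr h')
        · exact Or.inl ⟨h, h'⟩
    rw [← hA, ← hB] at hcov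
    have hr := ENNReal.toReal_mono (by finiteness) hcov
    rw [ENNReal.toReal_add (by finiteness) (by finiteness),
      ENNReal.toReal_add (by finiteness) (by finiteness), ENNReal.toReal_one] at hr
    refine ENNReal.ofReal_le_of_le_toReal ?_
    linarith
  have hVmem : ∀ᵐ ω ∂P, V ω ∈ Ioo (0:ℝ) 1 := by
    refine ae_of_ae_map hVm.aemeasurable ?_
    rw [hVlaw]
    exact ae_restrict_mem measurableSet_Ioo
  have hup : ∫⁻ ω, ENNReal.ofReal (η ω * quantile μ (V ω)) ∂P ≤ K := by
    rw [layer P η _ hη hXm hη0]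
    refine lintegral_mono fun s => lintegral_mono fun t => ?_
    calc P {ω | s < η ω ∧ t < quantile μ (V ω)}
        ≤ P (V ⁻¹' Ioc (μ (Iic t)).toReal (1 - (ν (Iic s)).toReal)) := by
          refine measure_mono_ae ?_
          filter_upwards [hVmem] with ω hω
          rintro ⟨h1, h2⟩
          refine ⟨(lt_quantile_iff μ hω t).1 h2, ?_⟩
          have : (ν (Iic s)).toReal ≤ (ν (Iic (η ω))).toReal :=
            ENNReal.toReal_mono (by finiteness) (measure_mono (Iic_subset_Iic.2 h1.le))
          simp only [hV]
          linarith
      _ ≤ ENNReal.ofReal (1 - (ν (Iic s)).toReal - (μ (Iic t)).toReal) := by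
          rw [← Measure.map_apply hVm measurableSet_Ioc, hVlaw]
          refine (Measure.restrict_apply_le _ _).trans ?_
          rw [Real.volume_Ioc]
  have hEq := le_antisymm hup (hlow _ hXm hXlaw)
  refine ⟨?_, hXlaw, by rw [hRHS]; exact hEq⟩
  rw [hRHS]
  refine le_antisymm (sInf_le ⟨_, hXm, hX0, hXlaw, hEq.symm⟩) (le_sInf ?_)
  rintro c ⟨X, hX, _, hXl, rfl⟩
  exact hlow X hX hXl
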